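/- The complexity of the language L_sq satisfies p(n) = (1/2)·⌊(n+2)²/2⌋ for every n ≥ 0; explicitly, p(2n) = n² + 2n + 1 and p(2n+1) = n² + 3n + 2. -/

import Mathlib

/-!
For `m ≥ 1` and `r < m` let `perWord N m r` be the word of length `N` whose letter at position `i` is
`1` if `i % m = r` and `2` otherwise. These are exactly the words of length `N` in `L_sq`
(`mem_Lsq_iff`): `m` is the period and `r` the position of the first `1`.

Different pairs `(r, m)` can give the same word of length `N`: when `r ≥ N` no `1` is visible, and when
`r < N ≤ r + m` only one is. Truncating `r` at `N` and `m` at `max (r + 1) (N - r)` chooses one pair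
for each word, because the first `1` determines `r` and the second one, if visible, determines `m`.
Hence `p(N) = ∑_{r ≤ N} max 1 (N - 2 r)`, where the subtraction is truncated. Splitting off the first
and the last term of this sum gives `p(N + 2) = p(N) + N + 3`, from which the closed form follows.
-/

/-- `powWord w k` is the word `w` concatenated `k` times. -/
def powWord {A : Type*} (w : List A) (k : ℕ) : List A := (List.replicate k w).flatten

/-- `v` is a factor of the one-sided infinite periodic word `w^ω`. -/
def IsFactorPer {A : Type*} (w v : List A) : Prop := ∃ k, v <:+: powWord w k

/-- The number of left extensions of `v` inside `L`. -/
noncomputable def mL {A : Type*} (L : Set (List A)) (v : List A) : ℕ := {a : A | a :: v ∈ L}.ncard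

/-- The number of right extensions of `v` inside `L`. -/
noncomputable def mR {A : Type*} (L : Set (List A)) (v : List A) : ℕ := {b : A | v ++ [b] ∈ L}.ncard

/-- The number of two-sided extensions of `v` inside `L`. -/
noncomputable def mB {A : Type*} (L : Set (List A)) (v : List A) : ℕ :=
  {p : A × A | p.1 :: (v ++ [p.2]) ∈ L}.ncard

/-- A word of `L` is bispecial if it has at least two left and two right extensions. -/
def Bispecial {A : Type*} (L : Set (List A)) (v : List A) : Prop :=
  v ∈ L ∧ 2 ≤ mL L v ∧ 2 ≤ mR L v

/-- The multiplicity `i(v) = m_b(v) - m_l(v) - m_r(v) + 1` of a word. -/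
noncomputable def mult {A : Type*} (L : Set (List A)) (v : List A) : ℤ :=
  (mB L v : ℤ) - (mL L v : ℤ) - (mR L v : ℤ) + 1

/-- `b(n)`: the sum of the multiplicities of the bispecial words of length `n`. -/
noncomputable def bfun {A : Type*} (L : Set (List A)) (n : ℕ) : ℤ :=
  ∑ᶠ v ∈ {v : List A | Bispecial L v ∧ v.length = n}, mult L v

/-- The complexity `p(n)`: the number of words of length `n` in `L`. -/
noncomputable def comp {A : Type*} (L : Set (List A)) (n : ℕ) : ℕ :=
  {v : List A | v ∈ L ∧ v.length = n}.ncard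

/-- `L_sq`: the factors of the periodic words `(1·2ⁿ)^ω`, `n ∈ ℕ`, over the alphabet `{1,2}`. -/
def Lsq : Set (List ℕ) := {v | ∃ n : ℕ, IsFactorPer (1 :: List.replicate n 2) v}

/-- The word of length `N` with letter `1` at the positions congruent to `r` modulo `m`, and `2`
elsewhere. If `0 < m ≤ r`, no position carries a `1`. -/
def perWord (N m r : ℕ) : List ℕ := (List.range N).map fun i => if i % m = r then 1 else 2

lemma perWord_ext {N m r m' r' : ℕ} :
    perWord N m r = perWord N m' r' ↔ ∀ i < N, (i % m = r ↔ i % m' = r') := by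
  unfold perWord
  rw [List.map_inj_left]
  simp only [List.mem_range]
  refine forall₂_congr fun i _ => ?_
  split_ifs <;> simp_all

lemma powWord_eq (n k : ℕ) :
    powWord (1 :: List.replicate n 2) k = perWord (k * (n + 1)) (n + 1) 0 := by
  induction k with
  | zero => simp [powWord, perWord]
  | succ k ih =>
    have h : powWord (1 :: List.replicate n 2) (k + 1)
        = (1 :: List.replicate n 2) ++ powWord (1 :: List.replicate n 2) k := by
      simp [powWord, List.replicate_succ]
    rw [h, ih, perWord, perWord, show (k + 1) * (n + 1) = (n + 1) + k * (n + 1) by ring,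
      List.range_add, List.map_append, List.map_map]
    congr 1
    · rw [List.range_succ_eq_map, List.map_cons, List.map_map]
      simp only [Nat.zero_mod, if_true]
      congr 1
      symm
      rw [List.eq_replicate_iff]
      refine ⟨by simp, fun b hb => ?_⟩
      simp only [List.mem_map, List.mem_range, Function.comp] at hb
      obtain ⟨i, hi, rfl⟩ := hb
      rw [Nat.mod_eq_of_lt (by omega)]
      simp
    · simp [Function.comp_def]

/-- Reading `(1·2^(m-1))^ω` from position `j` on, the first `1` is at the representative of `-j`
modulo `m`. -/
lemma add_mod_eq_zero_iff {m r j : ℕ} (hr : r < m) (h : (j + r) % m = 0) (i : ℕ) :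
    (j + i) % m = 0 ↔ i % m = r := by
  have h1 : (j + i) % m = 0 ↔ j + i ≡ j + r [MOD m] := by rw [Nat.ModEq, h]
  have h2 : j + i ≡ j + r [MOD m] ↔ i ≡ r [MOD m] :=
    ⟨Nat.ModEq.add_left_cancel' j, Nat.ModEq.add_left j⟩
  rw [h1, h2, Nat.ModEq, Nat.mod_eq_of_lt hr]

lemma mem_Lsq_iff (v : List ℕ) (N : ℕ) :
    (v ∈ Lsq ∧ v.length = N) ↔ ∃ m r, r < m ∧ v = perWord N m r := by
  constructor
  · rintro ⟨⟨n, k, s, t, h⟩, rfl⟩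
    rw [powWord_eq] at h
    set j := s.length with hj
    have hd : (n + 1) * (j / (n + 1)) + j % (n + 1) = j := Nat.div_add_mod _ _
    have hlt : j % (n + 1) < n + 1 := Nat.mod_lt _ (by omega)
    obtain ⟨r, hr, hjr⟩ : ∃ r, r < n + 1 ∧ (j + r) % (n + 1) = 0 := by
      refine ⟨(n + 1 - j % (n + 1)) % (n + 1), Nat.mod_lt _ (by omega), ?_⟩
      rw [Nat.add_mod_mod, Nat.add_mod, Nat.add_mod_mod, ← Nat.mod_add_mod, Nat.mod_mod,
        Nat.add_sub_cancel' hlt.le, Nat.mod_self]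
    refine ⟨n + 1, r, hr, List.ext_getElem (by simp [perWord]) fun i hi _ => ?_⟩
    have h2 : (s ++ v ++ t)[j + i]? = some v[i] := by
      rw [List.append_assoc, List.getElem?_append_right (by omega),
        List.getElem?_append_left (by omega)]
      simp [← hj, hi]
    have hl := congrArg List.length h
    simp only [perWord, List.length_append, List.length_map, List.length_range] at hl
    rw [h, perWord, List.getElem?_map, List.getElem?_range (by omega)] at h2
    simp only [Option.map_some, Option.some.injEq] at h2
    simp only [perWord, List.getElem_map, List.getElem_range, ← h2, add_mod_eq_zero_iff hr hjr]
  · rintro ⟨m, r, hr, rfl⟩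
    obtain ⟨n, rfl⟩ : ∃ n, m = n + 1 := ⟨m - 1, by omega⟩
    refine ⟨⟨n, N + 1, ?_⟩, by simp [perWord]⟩
    -- From position `n + 1 - r` on, one reads `r` letters `2` and then a `1`.
    have hsplit : ∃ c, (N + 1) * (n + 1) = (n + 1 - r) + N + c :=
      Nat.exists_eq_add_of_le (by nlinarith [Nat.sub_le (n + 1) r])
    obtain ⟨c, hc⟩ := hsplit
    rw [powWord_eq, hc]
    have hr' : (n + 1 - r + r) % (n + 1) = 0 := by
      rw [Nat.sub_add_cancel hr.le, Nat.mod_self]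
    refine ⟨perWord (n + 1 - r) (n + 1) 0,
      (List.range c).map fun i => if (n + 1 - r + N + i) % (n + 1) = 0 then 1 else 2, ?_⟩
    unfold perWord
    rw [List.range_add, List.map_append, List.range_add, List.map_append, List.map_map,
      List.map_map]
    congr 2
    refine List.map_congr_left fun i _ => ?_
    simp only [Function.comp, add_mod_eq_zero_iff hr hr']

/-- The canonical pairs `(r, m)`: each word of length `N` in `L_sq` comes from exactly one. -/
def canon (N : ℕ) : Finset (Σ _ : ℕ, ℕ) :=
  (Finset.range (N + 1)).sigma fun r => Finset.Icc (r + 1) (max (r + 1) (N - r))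

lemma mem_canon {N r m : ℕ} :
    (⟨r, m⟩ : Σ _ : ℕ, ℕ) ∈ canon N ↔ r ≤ N ∧ r < m ∧ m ≤ max (r + 1) (N - r) := by
  simp only [canon, Finset.mem_sigma, Finset.mem_range, Finset.mem_Icc]
  omega

/-- The first visible `1` is at position `r`, so a word cannot have two different values of `r`. -/
lemma not_lt_of_eq {N m r m' r' : ℕ} (hr' : r' < m') (hrm : r < m) (hN : r' ≤ N)
    (h : ∀ i < N, (i % m = r ↔ i % m' = r')) : ¬ r < r' := by
  intro hlt
  have := (h r (by omega)).1 (Nat.mod_eq_of_lt hrm)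
  rw [Nat.mod_eq_of_lt (by omega)] at this
  omega

/-- A second visible `1` is at position `r + m`, so it determines `m`. -/
lemma not_lt_of_eq' {N m m' r : ℕ} (hr : r < m) (hm' : m' ≤ max (r + 1) (N - r))
    (h : ∀ i < N, (i % m = r ↔ i % m' = r)) : ¬ m < m' := by
  intro hlt
  have h1 := (h (m + r) (by omega)).1 (by rw [Nat.add_mod_left, Nat.mod_eq_of_lt hr])
  by_cases h2 : m + r < m'
  · rw [Nat.mod_eq_of_lt h2] at h1
    omega
  · rw [Nat.mod_eq_sub_mod (by omega), Nat.mod_eq_of_lt (by omega)] at h1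
    omega

lemma injOn_canon (N : ℕ) :
    Set.InjOn (fun p : Σ _ : ℕ, ℕ => perWord N p.2 p.1) (canon N) := by
  rintro ⟨r, m⟩ hp ⟨r', m'⟩ hp' h
  rw [Finset.mem_coe, mem_canon] at hp hp'
  have h := perWord_ext.1 h
  have h' : ∀ i < N, (i % m' = r' ↔ i % m = r) := fun i hi => (h i hi).symm
  obtain rfl : r = r' := by
    have h1 := not_lt_of_eq hp'.2.1 hp.2.1 hp'.1 h
    have h2 := not_lt_of_eq hp.2.1 hp'.2.1 hp.1 h'
    omega
  obtain rfl : m = m' := by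
    have h1 := not_lt_of_eq' hp.2.1 hp'.2.2 h
    have h2 := not_lt_of_eq' hp'.2.1 hp.2.2 h'
    omega
  rfl

/-- Below position `r + m` the only `1` is at `r`. -/
lemma mod_eq_iff_of_lt {m r i : ℕ} (hr : r < m) (hi : i < r + m) : i % m = r ↔ i = r := by
  by_cases h : i < m
  · rw [Nat.mod_eq_of_lt h]
  · rw [Nat.mod_eq_sub_mod (by omega), Nat.mod_eq_of_lt (by omega)]
    omega

lemma exists_canon {N m r : ℕ} (hr : r < m) :
    ∃ p ∈ canon N, perWord N p.2 p.1 = perWord N m r := by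
  by_cases hN : N ≤ r
  · refine ⟨⟨N, N + 1⟩, mem_canon.2 (by omega), perWord_ext.2 fun i hi => ?_⟩
    dsimp only
    rw [mod_eq_iff_of_lt (by omega) (by omega), mod_eq_iff_of_lt hr (by omega)]
    omega
  · by_cases hm : m ≤ max (r + 1) (N - r)
    · exact ⟨⟨r, m⟩, mem_canon.2 (by omega), rfl⟩
    · refine ⟨⟨r, max (r + 1) (N - r)⟩, mem_canon.2 (by omega), perWord_ext.2 fun i hi => ?_⟩
      dsimp only
      rw [mod_eq_iff_of_lt (by omega) (by omega), mod_eq_iff_of_lt hr (by omega)]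

lemma card_canon (N : ℕ) : (canon N).card = ∑ r ∈ Finset.range (N + 1), max 1 (N - 2 * r) := by
  rw [canon, Finset.card_sigma]
  refine Finset.sum_congr rfl fun r _ => ?_
  rw [Nat.card_Icc]
  omega

lemma comp_Lsq_eq_sum (N : ℕ) :
    comp Lsq N = ∑ r ∈ Finset.range (N + 1), max 1 (N - 2 * r) := by
  have h : {v : List ℕ | v ∈ Lsq ∧ v.length = N}
      = (fun p : Σ _ : ℕ, ℕ => perWord N p.2 p.1) '' (canon N) := by
    ext v
    rw [Set.mem_ofPred_eq, mem_Lsq_iff]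
    constructor
    · rintro ⟨m, r, hr, rfl⟩
      exact exists_canon hr
    · rintro ⟨⟨r, m⟩, hp, rfl⟩
      exact ⟨m, r, (mem_canon.1 hp).2.1, rfl⟩
  rw [comp, h, (injOn_canon N).ncard_image, Set.ncard_coe_finset, card_canon]

lemma comp_Lsq_add_two (N : ℕ) : comp Lsq (N + 2) = comp Lsq N + N + 3 := by
  rw [comp_Lsq_eq_sum, comp_Lsq_eq_sum, Finset.sum_range_succ', Finset.sum_range_succ]
  have h : ∀ r, N + 2 - 2 * (r + 1) = N - 2 * r := fun r => by omega
  simp only [h]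
  omega

lemma comp_Lsq_even_odd (n : ℕ) :
    comp Lsq (2*n) = n^2 + 2*n + 1 ∧ comp Lsq (2*n+1) = n^2 + 3*n + 2 := by
  induction n with
  | zero => constructor <;> rw [comp_Lsq_eq_sum] <;> decide
  | succ n ih =>
    rw [show 2 * (n + 1) = 2 * n + 2 by ring, show 2 * n + 2 + 1 = 2 * n + 1 + 2 by ring,
      comp_Lsq_add_two, comp_Lsq_add_two, ih.1, ih.2]
    constructor <;> ring

/-- The complexity of `L_sq` is `p(n) = (1/2)⌊(n+2)²/2⌋`; explicitly
`p(2n) = n² + 2n + 1` and `p(2n+1) = n² + 3n + 2`. -/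
theorem complexity_Lsq :
    (∀ n : ℕ, comp Lsq n = (n+2)^2 / 2 / 2) ∧
    (∀ n : ℕ, comp Lsq (2*n) = n^2 + 2*n + 1 ∧ comp Lsq (2*n+1) = n^2 + 3*n + 2) := by
  refine ⟨fun N => ?_, comp_Lsq_even_odd⟩
  rw [Nat.div_div_eq_div_mul]
  obtain ⟨n, rfl | rfl⟩ := Nat.even_or_odd' N
  · rw [(comp_Lsq_even_odd n).1, show (2 * n + 2) ^ 2 = (2 * 2) * (n ^ 2 + 2 * n + 1) by ring,
      Nat.mul_div_cancel_left _ (by norm_num)]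
  · rw [(comp_Lsq_even_odd n).2,
      show (2 * n + 1 + 2) ^ 2 = 1 + (2 * 2) * (n ^ 2 + 3 * n + 2) by ring,
      Nat.add_mul_div_left _ _ (by norm_num)]
    norm_num
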